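/- Let f(z) = z + Σ_{n≥2} a_n zⁿ be a typically real function on the open unit disc 𝔻 and let λ ≥ 1 be a real number. Then |λ a_4² − a_7| ≤ 16λ − 7. -/

import Mathlib

/-!
On the circle of radius `r < 1` the imaginary part of `f` is the sine series `∑ aₖ rᵏ sin (k x)`.
It does not vanish for `0 < x < π` and its first coefficient is positive, so it is positive there.
Pairing it with a sine polynomial `∑ pₘ sin (m x)` that is nonnegative on `(0, π)` and letting
`r → 1` gives `0 ≤ ∑ pₘ aₘ`. Two families of sine polynomials suffice:

* `n sin x ± sin (n x)` gives `|aₙ| ≤ n`;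
* `c² sin x - 2 c sin (n x) + ∑_{k < n} sin ((2 k + 1) x)`, whose product with `sin x` is
  `(c sin x - sin (n x))²`, gives `aₙ² ≤ ∑_{k < n} a_{2 k + 1}` on taking `c = aₙ`.

Bounding all terms of the last sum but `a_{2 n - 1}` by `|aₖ| ≤ k` gives
`aₙ² - a_{2 n - 1} ≤ 1 + 3 + ⋯ + (2 n - 3) = (n - 1)²`, the upper bound for `λ = 1`; the rest
follows from `|aₙ| ≤ n` and `|a_{2 n - 1}| ≤ 2 n - 1`.
-/

open Real Set Filter Topology Finsupp

theorem sum_range_odd (n : ℕ) : ∑ k ∈ Finset.range n, (2 * k + 1) = n ^ 2 := by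
  induction n with
  | zero => rfl
  | succ n ih =>
    rw [Finset.sum_range_succ, ih]
    ring

section Trigonometry

theorem integral_cos_int_mul_eq_zero {j : ℤ} (hj : j ≠ 0) : ∫ x in 0..π, cos (j * x) = 0 := by
  rw [intervalIntegral.integral_comp_mul_left cos (Int.cast_ne_zero.mpr hj)]
  simp [sin_int_mul_pi]

theorem integral_sin_nat_mul_mul_sin_nat_mul (k : ℕ) {m : ℕ} (hm : m ≠ 0) :
    ∫ x in 0..π, sin (k * x) * sin (m * x) = if k = m then π / 2 else 0 := by
  have product_to_sum (x : ℝ) : sin (k * x) * sin (m * x) =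
      (cos ((k - m : ℤ) * x) - cos ((k + m : ℤ) * x)) / 2 := by
    push_cast
    rw [sub_mul, add_mul, ← two_mul_sin_mul_sin]
    ring
  simp_rw [product_to_sum]
  rw [intervalIntegral.integral_div, intervalIntegral.integral_sub
    (Continuous.intervalIntegrable (by fun_prop) _ _)
    (Continuous.intervalIntegrable (by fun_prop) _ _),
    integral_cos_int_mul_eq_zero (j := k + m) (by omega)]
  split_ifs with hkm
  · simp [hkm]
  · rw [integral_cos_int_mul_eq_zero (j := k - m) (by omega), sub_zero, zero_div]

theorem abs_sin_nat_mul_le (n : ℕ) (x : ℝ) : |sin (n * x)| ≤ n * |sin x| := by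
  induction n with
  | zero => simp
  | succ n ih =>
    calc |sin ((n + 1 : ℕ) * x)|
        = |sin (n * x) * cos x + cos (n * x) * sin x| := by
          rw [← sin_add]
          push_cast
          ring_nf
      _ ≤ |sin (n * x)| * |cos x| + |cos (n * x)| * |sin x| := by
          simpa only [abs_mul] using abs_add_le (sin (n * x) * cos x) (cos (n * x) * sin x)
      _ ≤ n * |sin x| * 1 + 1 * |sin x| := by
          gcongr
          exacts [abs_cos_le_one x, abs_cos_le_one (n * x)]
      _ = (n + 1 : ℕ) * |sin x| := by
          push_cast
          ring

theorem sin_mul_sum_sin_odd_mul (n : ℕ) (x : ℝ) :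
    sin x * ∑ k ∈ Finset.range n, sin ((2 * k + 1 : ℕ) * x) = sin (n * x) ^ 2 := by
  convert sin_mul_sum_sin n (2 * x) x using 3
  · ring
  · push_cast
    ring_nf
  · ring_nf

theorem sq_mul_sin_sub_add_sum_sin_odd_mul_nonneg (n : ℕ) (c : ℝ) {x : ℝ} (hx : 0 < sin x) :
    0 ≤ c ^ 2 * sin x - 2 * c * sin (n * x) +
      ∑ k ∈ Finset.range n, sin ((2 * k + 1 : ℕ) * x) := by
  refine nonneg_of_mul_nonneg_right ?_ hx
  calc 0 ≤ (c * sin x - sin (n * x)) ^ 2 := sq_nonneg _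
    _ = _ := by
      rw [mul_add, sin_mul_sum_sin_odd_mul]
      ring

end Trigonometry

section SineSeries

/-- The sine series `∑ bₖ sin (k x)`, as a function of `x`. The value is `0` wherever the series is
not summable. -/
noncomputable def sineSeries (b : ℕ → ℝ) (x : ℝ) : ℝ :=
  ∑' k : ℕ, b k * sin (k * x)

variable {b : ℕ → ℝ}

theorem norm_mul_sin_le (c x : ℝ) : ‖c * sin x‖ ≤ ‖c‖ := by
  rw [norm_mul]
  exact mul_le_of_le_one_right (norm_nonneg c) (abs_sin_le_one x)

theorem hasSum_sineSeries (hb : Summable b) (x : ℝ) :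
    HasSum (fun k : ℕ => b k * sin (k * x)) (sineSeries b x) :=
  (hb.norm.of_norm_bounded fun k => norm_mul_sin_le (b k) (k * x)).hasSum

theorem continuous_sineSeries (hb : Summable b) : Continuous (sineSeries b) :=
  continuous_tsum (fun k => by fun_prop) hb.norm fun k x => norm_mul_sin_le (b k) (k * x)

theorem integral_sineSeries_mul_sin (hb : Summable b) {m : ℕ} (hm : m ≠ 0) :
    ∫ x in 0..π, sineSeries b x * sin (m * x) = b m * (π / 2) := by
  have termwise : HasSum (fun k : ℕ => ∫ x in 0..π, b k * sin (k * x) * sin (m * x))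
      (∫ x in 0..π, sineSeries b x * sin (m * x)) :=
    intervalIntegral.hasSum_integral_of_dominated_convergence (fun k _ => ‖b k‖)
      (fun k => Continuous.aestronglyMeasurable (by fun_prop))
      (fun k => .of_forall fun x _ =>
        (norm_mul_sin_le _ _).trans (norm_mul_sin_le (b k) (k * x)))
      (.of_forall fun _ _ => hb.norm) intervalIntegrable_const
      (.of_forall fun x _ => (hasSum_sineSeries hb x).mul_right _)
  have integral_term (k : ℕ) : ∫ x in 0..π, b k * sin (k * x) * sin (m * x) =
      if k = m then b m * (π / 2) else 0 := by
    simp_rw [mul_assoc]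
    rw [intervalIntegral.integral_const_mul, integral_sin_nat_mul_mul_sin_nat_mul k hm]
    aesop
  simp_rw [integral_term] at termwise
  exact termwise.unique (hasSum_ite_eq m _)

theorem integral_sineSeries_mul_linearCombination (hb : Summable b) (hb₀ : b 0 = 0) (p : ℕ →₀ ℝ) :
    ∫ x in 0..π, sineSeries b x * linearCombination ℝ (fun m : ℕ => sin (m * x)) p =
      linearCombination ℝ b p * (π / 2) := by
  have hcont := continuous_sineSeries hb
  simp only [linearCombination_apply, Finsupp.sum, smul_eq_mul, Finset.mul_sum, Finset.sum_mul]
  rw [intervalIntegral.integral_finsetSum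
    fun m _ => Continuous.intervalIntegrable (by fun_prop) _ _]
  refine Finset.sum_congr rfl fun m _ => ?_
  simp_rw [mul_left_comm _ (p m)]
  rw [intervalIntegral.integral_const_mul, mul_assoc]
  rcases eq_or_ne m 0 with rfl | hm
  · simp [hb₀]
  · rw [integral_sineSeries_mul_sin hb hm]

theorem linearCombination_nonneg_of_sineSeries_nonneg (hb : Summable b) (hb₀ : b 0 = 0)
    (hpos : ∀ x ∈ Ioo 0 π, 0 ≤ sineSeries b x) {p : ℕ →₀ ℝ}
    (hp : ∀ x ∈ Ioo 0 π, 0 ≤ linearCombination ℝ (fun m : ℕ => sin (m * x)) p) :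
    0 ≤ linearCombination ℝ b p := by
  refine nonneg_of_mul_nonneg_left ?_ pi_div_two_pos
  rw [← integral_sineSeries_mul_linearCombination hb hb₀,
    intervalIntegral.integral_of_le pi_pos.le, MeasureTheory.integral_Ioc_eq_integral_Ioo]
  exact MeasureTheory.setIntegral_nonneg measurableSet_Ioo fun x hx =>
    mul_nonneg (hpos x hx) (hp x hx)

theorem sineSeries_pos_of_ne_zero (hb : Summable b) (hb₁ : 0 < b 1)
    (hne : ∀ x ∈ Ioo 0 π, sineSeries b x ≠ 0) {x : ℝ} (hx : x ∈ Ioo 0 π) :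
    0 < sineSeries b x := by
  have hcont := continuous_sineSeries hb
  by_contra! hx_nonpos
  have hneg : ∀ y ∈ Ioo 0 π, sineSeries b y < 0 := by
    intro y hy
    by_contra! hy_nonneg
    obtain ⟨z, hz, hz_zero⟩ := isPreconnected_Ioo.intermediate_value hx hy hcont.continuousOn
      ⟨hx_nonpos, hy_nonneg⟩
    exact hne z hz hz_zero
  have integral_neg : 0 < ∫ y in 0..π, -(sineSeries b y * sin ((1 : ℕ) * y)) := by
    refine intervalIntegral.intervalIntegral_pos_of_pos_on
      (Continuous.intervalIntegrable (by fun_prop) _ _) (fun y hy => ?_) pi_pos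
    rw [Nat.cast_one, one_mul, neg_pos]
    exact mul_neg_of_neg_of_pos (hneg y hy) (sin_pos_of_mem_Ioo hy)
  rw [intervalIntegral.integral_neg, integral_sineSeries_mul_sin hb one_ne_zero] at integral_neg
  linarith [mul_pos hb₁ pi_div_two_pos]

end SineSeries

theorem ofReal_mul_exp_mem_ball {r R : ℝ} (hr : |r| < R) (x : ℝ) :
    r * Complex.exp (x * Complex.I) ∈ Metric.ball (0 : ℂ) R := by
  simpa [Complex.norm_exp_ofReal_mul_I] using hr

/-- `f` is a typically real function on the open unit disc, with Taylor coefficients `a` at `0`.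
The coefficients are real by choice of type, and analyticity is expressed by the convergence of the
Taylor series to `f`. The values of `f` outside the disc are irrelevant. -/
structure IsTypicallyReal (f : ℂ → ℂ) (a : ℕ → ℝ) : Prop where
  coeff_zero : a 0 = 0
  coeff_one : a 1 = 1
  hasSum : ∀ z ∈ Metric.ball (0 : ℂ) 1, HasSum (fun k => (a k : ℂ) * z ^ k) (f z)
  im_eq_zero_iff : ∀ z ∈ Metric.ball (0 : ℂ) 1, (f z).im = 0 ↔ z.im = 0

namespace IsTypicallyReal

variable {f : ℂ → ℂ} {a : ℕ → ℝ}

theorem summable_coeff_mul_pow (h : IsTypicallyReal f a) {r : ℝ} (hr : |r| < 1) :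
    Summable fun k => a k * r ^ k := by
  have := (h.hasSum r (by simpa using hr)).summable
  exact_mod_cast this

theorem im_apply_mul_exp (h : IsTypicallyReal f a) {r : ℝ} (hr : |r| < 1) (x : ℝ) :
    (f (r * Complex.exp (x * Complex.I))).im = sineSeries (fun k => a k * r ^ k) x := by
  have im_term (k : ℕ) : ((a k : ℂ) * (r * Complex.exp (x * Complex.I)) ^ k).im =
      a k * r ^ k * sin (k * x) := by
    have : (a k : ℂ) * (r * Complex.exp (x * Complex.I)) ^ k =
        (a k * r ^ k : ℝ) * Complex.exp ((k * x : ℝ) * Complex.I) := by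
      rw [mul_pow, ← Complex.exp_nat_mul]
      push_cast
      ring_nf
    rw [this, Complex.im_ofReal_mul, Complex.exp_ofReal_mul_I_im]
  have hasSum_im := Complex.hasSum_im (h.hasSum _ (ofReal_mul_exp_mem_ball hr x))
  simpa only [im_term, sineSeries] using hasSum_im.tsum_eq.symm

theorem sineSeries_coeff_mul_pow_pos (h : IsTypicallyReal f a) {r : ℝ} (hr : r ∈ Ioo 0 1)
    {x : ℝ} (hx : x ∈ Ioo 0 π) : 0 < sineSeries (fun k => a k * r ^ k) x := by
  have hr' : |r| < 1 := abs_lt.mpr ⟨by linarith [hr.1], hr.2⟩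
  refine sineSeries_pos_of_ne_zero (h.summable_coeff_mul_pow hr')
    (by simpa [h.coeff_one] using hr.1) (fun y hy => ?_) hx
  rw [← h.im_apply_mul_exp hr', Ne, h.im_eq_zero_iff _ (ofReal_mul_exp_mem_ball hr' y),
    Complex.im_ofReal_mul, Complex.exp_ofReal_mul_I_im]
  exact (mul_pos hr.1 (sin_pos_of_mem_Ioo hy)).ne'

theorem linearCombination_coeff_nonneg (h : IsTypicallyReal f a) {p : ℕ →₀ ℝ}
    (hp : ∀ x ∈ Ioo 0 π, 0 ≤ linearCombination ℝ (fun m : ℕ => sin (m * x)) p) :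
    0 ≤ linearCombination ℝ a p := by
  have tendsto_coeff : Tendsto (fun r : ℝ => linearCombination ℝ (fun k => a k * r ^ k) p)
      (𝓝[<] 1) (𝓝 (linearCombination ℝ a p)) := by
    have hcont : Continuous fun r : ℝ => linearCombination ℝ (fun k => a k * r ^ k) p := by
      simp only [linearCombination_apply, Finsupp.sum]
      fun_prop
    simpa using (hcont.tendsto 1).mono_left nhdsWithin_le_nhds
  refine ge_of_tendsto tendsto_coeff ?_
  filter_upwards [Ioo_mem_nhdsLT one_pos] with r hr
  exact linearCombination_nonneg_of_sineSeries_nonneg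
    (h.summable_coeff_mul_pow (abs_lt.mpr ⟨by linarith [hr.1], hr.2⟩)) (by simp [h.coeff_zero])
    (fun x hx => (h.sineSeries_coeff_mul_pow_pos hr hx).le) hp

theorem abs_coeff_le (h : IsTypicallyReal f a) (n : ℕ) : |a n| ≤ n := by
  have sin_bound {x : ℝ} (hx : x ∈ Ioo 0 π) : |sin (n * x)| ≤ n * sin x := by
    simpa only [abs_of_pos (sin_pos_of_mem_Ioo hx)] using abs_sin_nat_mul_le n x
  have lower := h.linearCombination_coeff_nonneg (p := single 1 (n : ℝ) + single n 1)
    fun x hx => by simpa [neg_le_iff_add_nonneg'] using (abs_le.mp (sin_bound hx)).1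
  have upper := h.linearCombination_coeff_nonneg (p := single 1 (n : ℝ) - single n 1)
    fun x hx => by simpa using (abs_le.mp (sin_bound hx)).2
  simp only [map_add, map_sub, linearCombination_single, h.coeff_one, smul_eq_mul] at lower upper
  exact abs_le.mpr ⟨by linarith, by linarith⟩

theorem sq_coeff_le_sum_odd_coeff (h : IsTypicallyReal f a) (n : ℕ) :
    a n ^ 2 ≤ ∑ k ∈ Finset.range n, a (2 * k + 1) := by
  have := h.linearCombination_coeff_nonneg
    (p := single 1 (a n ^ 2) - single n (2 * a n) + ∑ k ∈ Finset.range n, single (2 * k + 1) 1)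
    fun x hx => by
      simpa only [map_add, map_sub, map_sum, linearCombination_single, smul_eq_mul, one_mul,
        Nat.cast_one] using
        sq_mul_sin_sub_add_sum_sin_odd_mul_nonneg n (a n) (sin_pos_of_mem_Ioo hx)
  simp only [map_add, map_sub, map_sum, linearCombination_single, h.coeff_one, smul_eq_mul,
    one_mul] at this
  linarith

theorem sq_coeff_sub_coeff_le (h : IsTypicallyReal f a) (n : ℕ) :
    a (n + 1) ^ 2 - a (2 * n + 1) ≤ n ^ 2 := by
  have sum_le : ∑ k ∈ Finset.range n, a (2 * k + 1) ≤ (n : ℝ) ^ 2 :=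
    calc ∑ k ∈ Finset.range n, a (2 * k + 1)
        ≤ ∑ k ∈ Finset.range n, ((2 * k + 1 : ℕ) : ℝ) :=
          Finset.sum_le_sum fun k _ => (le_abs_self _).trans (h.abs_coeff_le _)
      _ = (n : ℝ) ^ 2 := by exact_mod_cast sum_range_odd n
  have := h.sq_coeff_le_sum_odd_coeff (n + 1)
  rw [Finset.sum_range_succ] at this
  linarith

end IsTypicallyReal

theorem zalcman_typically_real_a4_a7_general {f : ℂ → ℂ} {a : ℕ → ℝ} (h : IsTypicallyReal f a)
    {n : ℕ} (hn : 3 ≤ n) {lam : ℝ} (hlam : 1 ≤ lam) :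
    |lam * a (n + 1) ^ 2 - a (2 * n + 1)| ≤ lam * (n + 1) ^ 2 - (2 * n + 1) := by
  have sq_coeff_le : a (n + 1) ^ 2 ≤ ((n : ℝ) + 1) ^ 2 := by
    exact_mod_cast sq_le_sq.mpr ((h.abs_coeff_le (n + 1)).trans (le_abs_self _))
  have coeff_le : a (2 * n + 1) ≤ 2 * n + 1 := by
    exact_mod_cast (le_abs_self _).trans (h.abs_coeff_le (2 * n + 1))
  have hn' : (3 : ℝ) ≤ n := by exact_mod_cast hn
  refine abs_le'.mpr ⟨?_, ?_⟩
  · calc lam * a (n + 1) ^ 2 - a (2 * n + 1)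
        = (lam - 1) * a (n + 1) ^ 2 + (a (n + 1) ^ 2 - a (2 * n + 1)) := by ring
      _ ≤ (lam - 1) * (n + 1) ^ 2 + n ^ 2 := by
        gcongr
        exact h.sq_coeff_sub_coeff_le n
      _ = lam * (n + 1) ^ 2 - (2 * n + 1) := by ring
  · calc -(lam * a (n + 1) ^ 2 - a (2 * n + 1))
        ≤ a (2 * n + 1) := by nlinarith [sq_nonneg (a (n + 1))]
      _ ≤ 2 * n + 1 := coeff_le
      _ ≤ (n + 1) ^ 2 - (2 * n + 1) := by nlinarith
      _ ≤ lam * (n + 1) ^ 2 - (2 * n + 1) := by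
        gcongr
        exact le_mul_of_one_le_left (sq_nonneg _) hlam

theorem zalcman_typically_real_a4_a7
    (f : ℂ → ℂ) (a : ℕ → ℝ)
    (ha0 : a 0 = 0) (ha1 : a 1 = 1)
    (hf : ∀ z ∈ Metric.ball (0 : ℂ) 1, HasSum (fun k => (a k : ℂ) * z ^ k) (f z))
    (htr : ∀ z ∈ Metric.ball (0 : ℂ) 1, ((f z).im = 0 ↔ z.im = 0))
    (lam : ℝ) (hlam : 1 ≤ lam) :
    |lam * a 4 ^ 2 - a 7| ≤ 16 * lam - 7 := by
  refine (zalcman_typically_real_a4_a7_general ⟨ha0, ha1, hf, htr⟩ le_rfl hlam).trans_eq ?_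
  norm_num [mul_comm]
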